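/- Let H be a Hopf algebra over a field k with bijective antipode S, and let R : H⊗H → k be a coquasitriangular structure on H. For any unital k-algebra B, the linear maps on B⊗B⊗H defined by S_L(b⊗b'⊗h) := R(S²(h_{(2)}) ⊗ h_{(1)})·b' ⊗ b ⊗ S(h_{(3)}) and T(b⊗b'⊗h) := R(h_{(2)} ⊗ S(h_{(3)}))·b' ⊗ b ⊗ S⁻¹(h_{(1)}) are mutually inverse; moreover, if (▷,σ) is a cocycle datum for H on B and B⊗B⊗H carries the cocycle Hopf algebroid product, then S_L(t(c)X) = S_L(X)s(c) and T(s(c)X) = T(X)t(c) for all c ∈ B and X ∈ B⊗B⊗H. -/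

import Mathlib

/-!
Write `v(h) = R(S²(h₍₂₎) ⊗ h₍₁₎)` and `w(h) = R(h₍₁₎ ⊗ S(h₍₂₎))`.  By coassociativity
`S_L(b ⊗ b' ⊗ h) = v(h₍₁₎) b' ⊗ b ⊗ S(h₍₂₎)` and `T(b ⊗ b' ⊗ h) = w(h₍₂₎) b' ⊗ b ⊗ S⁻¹(h₍₁₎)`.
Since `S` is an anti-coalgebra map (`sw_antipode`), `S_L` and `T` are mutually inverse as soon as
`u := w ∘ S` is a two-sided convolution inverse of `v`.

This is the coquasitriangular form of Drinfeld's theorem on `S²`.  The braid relation for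
`R ∘ (S ⊗ S)`, applied to the pair `h₍₂₎, S(h₍₁₎)`, gives `u(h₍₂₎) h₍₃₎ S(h₍₁₎) = u(h) 1`
(`drinU_mul_antipode`), hence `u(h₍₁₎) h₍₂₎ = u(h₍₂₎) S²(h₍₁₎)` (`drinU_conj`).  With
multiplicativity of `R` in its first argument this yields `u * v = ε` (`drinU_conv_drinV`).
Applying `v` to `drinU_conj` then shows `(v ∘ S²) * u = ε`, so that `v ∘ S² = v` and `v * u = ε`
(`drinV_conv_drinU`).

The compatibilities with source and target follow from the explicit products with `s(c)` and `t(c)`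
(`target_mul`, `mul_source`, `source_mul`, `mul_target`), where the cocycle is trivial because one
of its arguments is `1`.

Sweedler sums are expressed by `sw k f h = ∑ f h₍₁₎ h₍₂₎`, with `f` linear in each leg; the predicate
`Lin` allows `fun_prop` to verify this linearity.
-/

open scoped TensorProduct
open Coalgebra

noncomputable section

section SweedlerDefs

variable (k : Type*) [Field k]
variable (H : Type*) [Ring H] [Bialgebra k H]

/-- Left-nested triple comultiplication `h ↦ (h₍₁₎ ⊗ h₍₂₎) ⊗ h₍₃₎`. -/
def Δ3 : H →ₗ[k] (H ⊗[k] H) ⊗[k] H :=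
  (LinearMap.rTensor H (Coalgebra.comul (R := k) (A := H))) ∘ₗ Coalgebra.comul

/-- Left-nested fourfold comultiplication. -/
def Δ4 : H →ₗ[k] ((H ⊗[k] H) ⊗[k] H) ⊗[k] H :=
  (LinearMap.rTensor H (Δ3 k H)) ∘ₗ Coalgebra.comul

/-- Left-nested fivefold comultiplication. -/
def Δ5 : H →ₗ[k] (((H ⊗[k] H) ⊗[k] H) ⊗[k] H) ⊗[k] H :=
  (LinearMap.rTensor H (Δ4 k H)) ∘ₗ Coalgebra.comul

/-- Left-nested sixfold comultiplication. -/
def Δ6 : H →ₗ[k] ((((H ⊗[k] H) ⊗[k] H) ⊗[k] H) ⊗[k] H) ⊗[k] H :=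
  (LinearMap.rTensor H (Δ5 k H)) ∘ₗ Coalgebra.comul

/-- `IsRep2 k H h h1 h2` says that `Δh = ∑ᵢ h1 i ⊗ h2 i`, i.e. the families `h1, h2`
realise the Sweedler legs `h₍₁₎ ⊗ h₍₂₎`. -/
def IsRep2 {n : ℕ} (h : H) (h1 h2 : Fin n → H) : Prop :=
  Coalgebra.comul (R := k) h = ∑ i, h1 i ⊗ₜ[k] h2 i

/-- A representation of the Sweedler legs `h₍₁₎ ⊗ h₍₂₎ ⊗ h₍₃₎`. -/
def IsRep3 {n : ℕ} (h : H) (h1 h2 h3 : Fin n → H) : Prop :=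
  Δ3 k H h = ∑ i, (h1 i ⊗ₜ[k] h2 i) ⊗ₜ[k] h3 i

/-- A representation of the Sweedler legs `h₍₁₎ ⊗ h₍₂₎ ⊗ h₍₃₎ ⊗ h₍₄₎`. -/
def IsRep4 {n : ℕ} (h : H) (h1 h2 h3 h4 : Fin n → H) : Prop :=
  Δ4 k H h = ∑ i, ((h1 i ⊗ₜ[k] h2 i) ⊗ₜ[k] h3 i) ⊗ₜ[k] h4 i

/-- A representation of the Sweedler legs `h₍₁₎ ⊗ ⋯ ⊗ h₍₅₎`. -/
def IsRep5 {n : ℕ} (h : H) (h1 h2 h3 h4 h5 : Fin n → H) : Prop :=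
  Δ5 k H h = ∑ i, (((h1 i ⊗ₜ[k] h2 i) ⊗ₜ[k] h3 i) ⊗ₜ[k] h4 i) ⊗ₜ[k] h5 i

/-- A representation of the Sweedler legs `h₍₁₎ ⊗ ⋯ ⊗ h₍₆₎`. -/
def IsRep6 {n : ℕ} (h : H) (h1 h2 h3 h4 h5 h6 : Fin n → H) : Prop :=
  Δ6 k H h = ∑ i, ((((h1 i ⊗ₜ[k] h2 i) ⊗ₜ[k] h3 i) ⊗ₜ[k] h4 i) ⊗ₜ[k] h5 i) ⊗ₜ[k] h6 i

/-- A Drinfeld 2-cocycle `χ : H ⊗ H → k` with convolution inverse `χi`. -/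
structure DrinfeldCocycle (χ χi : H →ₗ[k] H →ₗ[k] k) : Prop where
  conv_left : ∀ (h g : H) {n m : ℕ} (h1 h2 : Fin n → H) (g1 g2 : Fin m → H),
    IsRep2 k H h h1 h2 → IsRep2 k H g g1 g2 →
    ∑ i, ∑ j, χ (h1 i) (g1 j) * χi (h2 i) (g2 j)
      = Coalgebra.counit (R := k) h * Coalgebra.counit (R := k) g
  conv_right : ∀ (h g : H) {n m : ℕ} (h1 h2 : Fin n → H) (g1 g2 : Fin m → H),
    IsRep2 k H h h1 h2 → IsRep2 k H g g1 g2 →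
    ∑ i, ∑ j, χi (h1 i) (g1 j) * χ (h2 i) (g2 j)
      = Coalgebra.counit (R := k) h * Coalgebra.counit (R := k) g
  cocycle : ∀ (h g f : H) {n m p : ℕ} (h1 h2 : Fin n → H) (g1 g2 : Fin m → H)
      (f1 f2 : Fin p → H),
    IsRep2 k H h h1 h2 → IsRep2 k H g g1 g2 → IsRep2 k H f f1 f2 →
    ∑ j, ∑ l, χ (g1 j) (f1 l) * χ h (g2 j * f2 l)
      = ∑ i, ∑ j, χ (h1 i) (g1 j) * χ (h2 i * g2 j) f
  one_cocy : ∀ h : H, χ 1 h = Coalgebra.counit (R := k) h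
  cocy_one : ∀ h : H, χ h 1 = Coalgebra.counit (R := k) h

/-- The twisted product `h • g = χ(h₍₁₎,g₍₁₎) h₍₂₎g₍₂₎ χ⁻¹(h₍₃₎,g₍₃₎)` of the Drinfeld
cotwist `H^χ`, given as a bilinear map `tmul`. -/
def IsTwistedMul (χ χi : H →ₗ[k] H →ₗ[k] k) (tmul : H →ₗ[k] H →ₗ[k] H) : Prop :=
  ∀ (h g : H) {n m : ℕ} (h1 h2 h3 : Fin n → H) (g1 g2 g3 : Fin m → H),
    IsRep3 k H h h1 h2 h3 → IsRep3 k H g g1 g2 g3 →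
    tmul h g = ∑ i, ∑ j, (χ (h1 i) (g1 j) * χi (h3 i) (g3 j)) • (h2 i * g2 j)

/-- A coquasitriangular structure `r` on `H`, with convolution inverse `ri`. -/
structure Coquasitriangular (r ri : H →ₗ[k] H →ₗ[k] k) : Prop where
  conv_left : ∀ (h g : H) {n m : ℕ} (h1 h2 : Fin n → H) (g1 g2 : Fin m → H),
    IsRep2 k H h h1 h2 → IsRep2 k H g g1 g2 →
    ∑ i, ∑ j, r (h1 i) (g1 j) * ri (h2 i) (g2 j)
      = Coalgebra.counit (R := k) h * Coalgebra.counit (R := k) g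
  conv_right : ∀ (h g : H) {n m : ℕ} (h1 h2 : Fin n → H) (g1 g2 : Fin m → H),
    IsRep2 k H h h1 h2 → IsRep2 k H g g1 g2 →
    ∑ i, ∑ j, ri (h1 i) (g1 j) * r (h2 i) (g2 j)
      = Coalgebra.counit (R := k) h * Coalgebra.counit (R := k) g
  braid : ∀ (h g : H) {n m : ℕ} (h1 h2 : Fin n → H) (g1 g2 : Fin m → H),
    IsRep2 k H h h1 h2 → IsRep2 k H g g1 g2 →
    ∑ i, ∑ j, r (h2 i) (g2 j) • (g1 j * h1 i) = ∑ i, ∑ j, r (h1 i) (g1 j) • (h2 i * g2 j)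
  mul_right : ∀ (h g f : H) {n : ℕ} (h1 h2 : Fin n → H), IsRep2 k H h h1 h2 →
    r h (g * f) = ∑ i, r (h1 i) g * r (h2 i) f
  mul_left : ∀ (h g f : H) {n : ℕ} (f1 f2 : Fin n → H), IsRep2 k H f f1 f2 →
    r (h * g) f = ∑ i, r h (f1 i) * r g (f2 i)

variable (B : Type*) [Ring B] [Algebra k B]

/-- `u, ui : H → B` are convolution inverses of each other. -/
def ConvInv (u ui : H →ₗ[k] B) : Prop :=
  ∀ (h : H) {n : ℕ} (h1 h2 : Fin n → H), IsRep2 k H h h1 h2 →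
    ∑ i, u (h1 i) * ui (h2 i) = Coalgebra.counit (R := k) h • (1 : B)
    ∧ ∑ i, ui (h1 i) * u (h2 i) = Coalgebra.counit (R := k) h • (1 : B)

/-- A measuring of `H` on `B`:  `h ▷ (ab) = (h₍₁₎ ▷ a)(h₍₂₎ ▷ b)` and `h ▷ 1 = ε(h)1`. -/
structure Measuring (act : H →ₗ[k] B →ₗ[k] B) : Prop where
  act_mul : ∀ (h : H) (a b : B) {n : ℕ} (h1 h2 : Fin n → H),
    IsRep2 k H h h1 h2 → act h (a * b) = ∑ i, act (h1 i) a * act (h2 i) b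
  act_one : ∀ h : H, act h 1 = Coalgebra.counit (R := k) h • (1 : B)

/-- A cocycle datum `(▷, σ)` (with chosen convolution inverse `σi` of `σ`). -/
structure CocycleDatum (act : H →ₗ[k] B →ₗ[k] B) (σ σi : H →ₗ[k] H →ₗ[k] B) : Prop where
  toMeasuring : Measuring k H B act
  conv_left : ∀ (h g : H) {n m : ℕ} (h1 h2 : Fin n → H) (g1 g2 : Fin m → H),
    IsRep2 k H h h1 h2 → IsRep2 k H g g1 g2 →
    ∑ i, ∑ j, σ (h1 i) (g1 j) * σi (h2 i) (g2 j)
      = (Coalgebra.counit (R := k) h * Coalgebra.counit (R := k) g) • (1 : B)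
  conv_right : ∀ (h g : H) {n m : ℕ} (h1 h2 : Fin n → H) (g1 g2 : Fin m → H),
    IsRep2 k H h h1 h2 → IsRep2 k H g g1 g2 →
    ∑ i, ∑ j, σi (h1 i) (g1 j) * σ (h2 i) (g2 j)
      = (Coalgebra.counit (R := k) h * Coalgebra.counit (R := k) g) • (1 : B)
  one_act : ∀ b : B, act 1 b = b
  act_act : ∀ (h g : H) (b : B) {n m : ℕ} (h1 h2 h3 : Fin n → H) (g1 g2 g3 : Fin m → H),
    IsRep3 k H h h1 h2 h3 → IsRep3 k H g g1 g2 g3 →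
    act h (act g b) = ∑ i, ∑ j, σ (h1 i) (g1 j) * act (h2 i * g2 j) b * σi (h3 i) (g3 j)
  sigma_one : ∀ h : H, σ h 1 = Coalgebra.counit (R := k) h • (1 : B)
  one_sigma : ∀ h : H, σ 1 h = Coalgebra.counit (R := k) h • (1 : B)
  cocycle : ∀ (h g f : H) {n m p : ℕ} (h1 h2 : Fin n → H) (g1 g2 : Fin m → H)
      (f1 f2 : Fin p → H),
    IsRep2 k H h h1 h2 → IsRep2 k H g g1 g2 → IsRep2 k H f f1 f2 →
    ∑ i, ∑ j, ∑ l, act (h1 i) (σ (g1 j) (f1 l)) * σ (h2 i) (g2 j * f2 l)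
      = ∑ i, ∑ j, σ (h1 i) (g1 j) * σ (h2 i * g2 j) f

/-- The cocycle cross product multiplication on `P = B ⊗ H`:
`(b#h)(c#g) = b(h₍₁₎▷c)σ(h₍₂₎,g₍₁₎) # h₍₃₎g₍₂₎`, given as a bilinear map `mult`. -/
def IsCrossMul (act : H →ₗ[k] B →ₗ[k] B) (σ : H →ₗ[k] H →ₗ[k] B)
    (mult : B ⊗[k] H →ₗ[k] B ⊗[k] H →ₗ[k] B ⊗[k] H) : Prop :=
  ∀ (b c : B) (h g : H) {n m : ℕ} (h1 h2 h3 : Fin n → H) (g1 g2 : Fin m → H),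
    IsRep3 k H h h1 h2 h3 → IsRep2 k H g g1 g2 →
    mult (b ⊗ₜ[k] h) (c ⊗ₜ[k] g)
      = ∑ i, ∑ j, (b * act (h1 i) c * σ (h2 i) (g1 j)) ⊗ₜ[k] (h3 i * g2 j)

end SweedlerDefs

section HopfDefs

variable (k : Type*) [Field k]
variable (H : Type*) [Ring H] [HopfAlgebra k H]
variable (B : Type*) [Ring B] [Algebra k B]

/-- The cocycle Hopf algebroid multiplication on `B ⊗ B ⊗ H`:
`(b⊗b'⊗h)(c⊗c'⊗g) = b(h₍₁₎▷c)σ(h₍₂₎,g₍₁₎) ⊗ c'(S(g₍₄₎)▷b')σ(S(g₍₃₎),S(h₍₄₎)) ⊗ h₍₃₎g₍₂₎`,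
given as a bilinear map `mult`. -/
def IsAlgebroidMul (act : H →ₗ[k] B →ₗ[k] B) (σ : H →ₗ[k] H →ₗ[k] B)
    (mult : B ⊗[k] (B ⊗[k] H) →ₗ[k] B ⊗[k] (B ⊗[k] H) →ₗ[k] B ⊗[k] (B ⊗[k] H)) : Prop :=
  ∀ (b b' c c' : B) (h g : H) {n m : ℕ}
    (h1 h2 h3 h4 : Fin n → H) (g1 g2 g3 g4 : Fin m → H),
    IsRep4 k H h h1 h2 h3 h4 → IsRep4 k H g g1 g2 g3 g4 →
    mult (b ⊗ₜ[k] (b' ⊗ₜ[k] h)) (c ⊗ₜ[k] (c' ⊗ₜ[k] g))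
      = ∑ i, ∑ j, (b * act (h1 i) c * σ (h2 i) (g1 j)) ⊗ₜ[k]
          ((c' * act (HopfAlgebra.antipode (R := k) (g4 j)) b'
              * σ (HopfAlgebra.antipode (R := k) (g3 j))
                  (HopfAlgebra.antipode (R := k) (h4 i))) ⊗ₜ[k] (h3 i * g2 j))

end HopfDefs

/-! ### Linearity of explicit expressions -/

/-- `Lin k f`: the function `f` is `k`-linear.  An unbundled predicate, so that linearity of
explicit Sweedler expressions in each leg can be discharged by `fun_prop`. -/
@[fun_prop]
structure Lin (k : Type*) [Field k] {M N : Type*} [AddCommGroup M] [Module k M]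
    [AddCommGroup N] [Module k N] (f : M → N) : Prop where
  add : ∀ x y, f (x + y) = f x + f y
  smul : ∀ (c : k) x, f (c • x) = c • f x

section Linearity

variable {k A : Type*} [Field k] [Ring A] [Algebra k A]
variable {M N P Q : Type*} [AddCommGroup M] [Module k M] [AddCommGroup N] [Module k N]
  [AddCommGroup P] [Module k P] [AddCommGroup Q] [Module k Q]

@[fun_prop]
theorem Lin.id' : Lin k (fun x : M => x) := ⟨fun _ _ => rfl, fun _ _ => rfl⟩

@[fun_prop]
theorem Lin.comp' {f : N → P} {g : M → N} (hf : Lin k f) (hg : Lin k g) :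
    Lin k (fun x => f (g x)) :=
  ⟨fun x y => by rw [hg.add, hf.add], fun c x => by rw [hg.smul, hf.smul]⟩

@[fun_prop]
theorem Lin.map (L : M →ₗ[k] N) : Lin k (fun x => L x) := ⟨map_add L, map_smul L⟩

@[fun_prop]
theorem Lin.map2 (L : M →ₗ[k] N →ₗ[k] P) {f : Q → M} (hf : Lin k f) (c : N) :
    Lin k (fun x => L (f x) c) :=
  ⟨fun x y => by simp [hf.add], fun a x => by simp [hf.smul]⟩

@[fun_prop]
theorem Lin.tmul1 {f : Q → M} (hf : Lin k f) (c : N) : Lin k (fun x => f x ⊗ₜ[k] c) :=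
  ⟨fun x y => by simp [hf.add, TensorProduct.add_tmul],
    fun a x => by simp [hf.smul, TensorProduct.smul_tmul']⟩

@[fun_prop]
theorem Lin.tmul2 {f : Q → M} (hf : Lin k f) (c : N) : Lin k (fun x => c ⊗ₜ[k] f x) :=
  ⟨fun x y => by simp [hf.add, TensorProduct.tmul_add], fun a x => by simp [hf.smul]⟩

@[fun_prop]
theorem Lin.mul1 {f : Q → A} (hf : Lin k f) (c : A) : Lin k (fun x => f x * c) :=
  ⟨fun x y => by simp [hf.add, add_mul], fun a x => by simp [hf.smul]⟩

@[fun_prop]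
theorem Lin.mul2 {f : Q → A} (hf : Lin k f) (c : A) : Lin k (fun x => c * f x) :=
  ⟨fun x y => by simp [hf.add, mul_add], fun a x => by simp [hf.smul]⟩

@[fun_prop]
theorem Lin.smul1 {f : Q → k} (hf : Lin k f) (c : M) : Lin k (fun x => f x • c) :=
  ⟨fun x y => by simp [hf.add, add_smul], fun a x => by simp [hf.smul, mul_smul]⟩

@[fun_prop]
theorem Lin.smul2 {f : Q → M} (hf : Lin k f) (c : k) : Lin k (fun x => c • f x) :=
  ⟨fun x y => by simp [hf.add], fun a x => by simp [hf.smul, smul_comm a]⟩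

/-- The linear map underlying a linear function. -/
def Lin.toMap {f : M → N} (hf : Lin k f) : M →ₗ[k] N where
  toFun := f
  map_add' := hf.add
  map_smul' := hf.smul

theorem Lin.sum {f : M → N} (hf : Lin k f) {ι : Type*} (s : Finset ι) (g : ι → M) :
    f (∑ i ∈ s, g i) = ∑ i ∈ s, f (g i) := map_sum hf.toMap g s

theorem Lin.zero {f : M → N} (hf : Lin k f) : f 0 = 0 := map_zero hf.toMap

end Linearity

/-! ### Sweedler calculus -/

section Sweedler

variable {k H : Type*} [Field k] [Ring H] [HopfAlgebra k H]
variable {M N P Q : Type*} [AddCommGroup M] [Module k M] [AddCommGroup N] [Module k N]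
  [AddCommGroup P] [Module k P] [AddCommGroup Q] [Module k Q]

local notation "𝒮" => (HopfAlgebra.antipode k (A := H) : H →ₗ[k] H)
local notation "ε" => Coalgebra.counit (R := k) (A := H)

variable (k) in
theorem exists_rep2 (h : H) : ∃ (n : ℕ) (h1 h2 : Fin n → H), IsRep2 k H h h1 h2 := by
  obtain ⟨s, a, b, e⟩ := Coalgebra.Repr.arbitrary k h
  refine ⟨s.card, fun i => a (s.equivFin.symm i), fun i => b (s.equivFin.symm i), ?_⟩
  unfold IsRep2
  rw [← e, ← Finset.sum_coe_sort s, ← Equiv.sum_comp s.equivFin.symm]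

variable (k) in
/-- The Sweedler sum `∑ f h₍₁₎ h₍₂₎`, computed with an arbitrary chosen representative of `Δ h`;
for bilinear `f` it is independent of that choice (`sw_rep2`). -/
def sw (f : H → H → M) (h : H) : M :=
  ∑ i, f ((exists_rep2 k h).choose_spec.choose i)
    ((exists_rep2 k h).choose_spec.choose_spec.choose i)

/-- The linear map on `H ⊗ H` induced by a bilinear function. -/
def lift2 (f : H → H → M) (hf1 : ∀ y, Lin k (fun x => f x y)) (hf2 : ∀ x, Lin k (fun y => f x y)) :
    H ⊗[k] H →ₗ[k] M :=
  TensorProduct.lift (LinearMap.mk₂ k f (fun a b y => (hf1 y).add a b)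
    (fun c a y => (hf1 y).smul c a) (fun x => (hf2 x).add) (fun c x y => (hf2 x).smul c y))

theorem sw_eq_lift2 (f : H → H → M) (hf1 : ∀ y, Lin k (fun x => f x y))
    (hf2 : ∀ x, Lin k (fun y => f x y)) (h : H) :
    sw k f h = lift2 f hf1 hf2 (comul (R := k) h) := by
  have := (exists_rep2 k h).choose_spec.choose_spec.choose_spec
  unfold IsRep2 at this
  rw [this, map_sum]
  rfl

theorem sw_rep2 (f : H → H → M) (hf1 : ∀ y, Lin k (fun x => f x y))
    (hf2 : ∀ x, Lin k (fun y => f x y)) (h : H) {n : ℕ} {h1 h2 : Fin n → H}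
    (hh : IsRep2 k H h h1 h2) : sw k f h = ∑ i, f (h1 i) (h2 i) := by
  unfold IsRep2 at hh
  rw [sw_eq_lift2 f hf1 hf2, hh, map_sum]
  rfl

@[fun_prop]
theorem Lin.sw_param {f : Q → H → H → M} (hf : ∀ x y, Lin k (fun q => f q x y)) (h : H) :
    Lin k (fun q => sw k (f q) h) := by
  constructor
  · intro x y
    simp only [sw, (hf _ _).add, Finset.sum_add_distrib]
  · intro c x
    simp only [sw, (hf _ _).smul, Finset.smul_sum]

@[fun_prop]
theorem Lin.sw_arg {f : H → H → M} (hf1 : ∀ y, Lin k (fun x => f x y))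
    (hf2 : ∀ x, Lin k (fun y => f x y)) : Lin k (fun h => sw k f h) := by
  constructor <;> intros <;> simp [sw_eq_lift2 f hf1 hf2]

theorem Lin.sw_map {g : M → N} (hg : Lin k g) (f : H → H → M) (h : H) :
    g (sw k f h) = sw k (fun x y => g (f x y)) h := hg.sum _ _

theorem sw_swap {M : Type*} [AddCommGroup M] (f : H → H → H → H → M) (h g : H) :
    sw k (fun x y => sw k (fun a b => f x y a b) g) h
      = sw k (fun a b => sw k (fun x y => f x y a b) h) g := Finset.sum_comm

/-- Coassociativity, oriented towards right-nested Sweedler sums. -/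
theorem sw_assoc (f : H → H → H → M) (hf1 : ∀ y z, Lin k (fun x => f x y z))
    (hf2 : ∀ x z, Lin k (fun y => f x y z)) (hf3 : ∀ x y, Lin k (fun z => f x y z)) (h : H) :
    sw k (fun x z => sw k (fun a b => f a b z) x) h
      = sw k (fun x y => sw k (fun b c => f x b c) y) h := by
  let F : H ⊗[k] (H ⊗[k] H) →ₗ[k] M := TensorProduct.lift
    { toFun := fun x => lift2 (f x) (hf2 x) (hf3 x)
      map_add' := fun a b => by
        ext y z; simpa [lift2] using (hf1 y z).add a b
      map_smul' := fun c a => by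
        ext y z; simpa [lift2] using (hf1 y z).smul c a }
  have hF : ∀ x y z, F (x ⊗ₜ (y ⊗ₜ z)) = f x y z := fun x y z => rfl
  have e := congrArg F (Coalgebra.coassoc_apply (R := k) h)
  obtain ⟨n, h1, h2, hh⟩ := exists_rep2 k h
  rw [sw_rep2 _ (by fun_prop) (by fun_prop) h hh, sw_rep2 _ (by fun_prop) (by fun_prop) h hh]
  unfold IsRep2 at hh
  rw [hh] at e
  simp only [map_sum, LinearMap.rTensor_tmul, LinearMap.lTensor_tmul] at e
  convert e using 2 with i _ i _
  · rw [sw_eq_lift2 _ (by fun_prop) (by fun_prop)]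
    obtain ⟨m, a, b, ha⟩ := exists_rep2 k (h1 i)
    unfold IsRep2 at ha
    simp only [ha, map_sum, TensorProduct.sum_tmul]
    rfl
  · rw [sw_eq_lift2 _ (by fun_prop) (by fun_prop)]
    rfl

theorem sw_counit_left {f : H → M} (hf : Lin k f) (h : H) :
    sw k (fun x y => ε x • f y) h = f h := by
  have e := congrArg (TensorProduct.lid k M ∘ LinearMap.lTensor k hf.toMap)
    (Coalgebra.rTensor_counit_comul (R := k) h)
  obtain ⟨n, h1, h2, hh⟩ := exists_rep2 k h
  rw [sw_rep2 _ (by fun_prop) (by fun_prop) h hh]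
  unfold IsRep2 at hh
  rw [hh] at e
  simpa [map_sum, Lin.toMap] using e

theorem sw_counit_right {f : H → M} (hf : Lin k f) (h : H) :
    sw k (fun x y => ε y • f x) h = f h := by
  have e := congrArg (TensorProduct.rid k M ∘ LinearMap.rTensor k hf.toMap)
    (Coalgebra.lTensor_counit_comul (R := k) h)
  obtain ⟨n, h1, h2, hh⟩ := exists_rep2 k h
  rw [sw_rep2 _ (by fun_prop) (by fun_prop) h hh]
  unfold IsRep2 at hh
  rw [hh] at e
  simpa [map_sum, Lin.toMap] using e

theorem sw_antipode_mul {f : H → M} (hf : Lin k f) (h : H) :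
    sw k (fun x y => f (𝒮 x * y)) h = ε h • f 1 := by
  have e := congrArg hf.toMap (HopfAlgebra.mul_antipode_rTensor_comul_apply (R := k) h)
  rw [sw_eq_lift2 _ (by fun_prop) (by fun_prop), ← hf.smul, ← Algebra.algebraMap_eq_smul_one]
  refine Eq.trans ?_ e
  obtain ⟨n, h1, h2, hh⟩ := exists_rep2 k h
  unfold IsRep2 at hh
  rw [hh]
  simp only [map_sum]
  rfl

theorem sw_mul_antipode {f : H → M} (hf : Lin k f) (h : H) :
    sw k (fun x y => f (x * 𝒮 y)) h = ε h • f 1 := by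
  have e := congrArg hf.toMap (HopfAlgebra.mul_antipode_lTensor_comul_apply (R := k) h)
  rw [sw_eq_lift2 _ (by fun_prop) (by fun_prop), ← hf.smul, ← Algebra.algebraMap_eq_smul_one]
  refine Eq.trans ?_ e
  obtain ⟨n, h1, h2, hh⟩ := exists_rep2 k h
  unfold IsRep2 at hh
  rw [hh]
  simp only [map_sum]
  rfl

/-- `∑ f (S(h₍₁₎) h₍₂₎) h₍₃₎ = f 1 h`. -/
theorem sw_antipode_mul_tail {f : H → H → M} (hf1 : ∀ y, Lin k (fun x => f x y))
    (hf2 : ∀ x, Lin k (fun y => f x y)) (h : H) :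
    sw k (fun x y => sw k (fun a b => f (𝒮 x * a) b) y) h = f 1 h := by
  rw [← sw_assoc (fun x a b => f (𝒮 x * a) b) (by fun_prop) (by fun_prop) (by fun_prop)]
  simp only [sw_antipode_mul (hf1 _)]
  exact sw_counit_left (hf2 1) h

theorem sw_congr {M : Type*} [AddCommGroup M] {f g : H → H → M} (e : ∀ x y, f x y = g x y)
    (h : H) : sw k f h = sw k g h := by
  rw [show f = g from funext fun x => funext fun y => e x y]

theorem map_sw (L : M →ₗ[k] N) (f : H → H → M) (h : H) :
    L (sw k f h) = sw k (fun x y => L (f x y)) h := Lin.sw_map (by fun_prop) f h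

theorem smul_sw (c : k) (f : H → H → M) (h : H) :
    c • sw k f h = sw k (fun x y => c • f x y) h :=
  Lin.sw_map (g := fun t => c • t) (by fun_prop) f h

theorem sw_smul (m : M) (f : H → H → k) (h : H) :
    sw k f h • m = sw k (fun x y => f x y • m) h :=
  Lin.sw_map (g := fun t => t • m) (by fun_prop) f h

theorem mul_sw {A : Type*} [Ring A] [Algebra k A] (c : A) (f : H → H → A) (h : H) :
    c * sw k f h = sw k (fun x y => c * f x y) h :=
  Lin.sw_map (g := fun t => c * t) (by fun_prop) f h

theorem sw_mul {A : Type*} [Ring A] [Algebra k A] (c : A) (f : H → H → A) (h : H) :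
    sw k f h * c = sw k (fun x y => f x y * c) h :=
  Lin.sw_map (g := fun t => t * c) (by fun_prop) f h

/-- The antipode is an anti-coalgebra map: `Δ(S h) = S(h₍₂₎) ⊗ S(h₍₁₎)`. -/
theorem sw_antipode {f : H → H → M} (hf1 : ∀ y, Lin k (fun x => f x y))
    (hf2 : ∀ x, Lin k (fun y => f x y)) (h : H) :
    sw k f (𝒮 h) = sw k (fun x y => f (𝒮 y) (𝒮 x)) h := by
  -- In the convolution algebra `Hom(H, H ⊗ H)`, both `Δ ∘ S` and `(S ⊗ S) ∘ τ ∘ Δ` invert `Δ`.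
  let G : H →ₗ[k] H ⊗[k] H :=
    TensorProduct.map 𝒮 𝒮 ∘ₗ (TensorProduct.comm k H H).toLinearMap ∘ₗ comul
  have hG : ∀ x, G x = sw k (fun a b => 𝒮 b ⊗ₜ[k] 𝒮 a) x := fun x => by
    obtain ⟨n, h1, h2, hh⟩ := exists_rep2 k x
    rw [sw_rep2 _ (by fun_prop) (by fun_prop) x hh]
    unfold IsRep2 at hh
    simp [G, hh]
  have hD : ∀ x : H, comul (R := k) x = sw k (fun a b => a ⊗ₜ[k] b) x := fun x => by
    obtain ⟨n, h1, h2, hh⟩ := exists_rep2 k x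
    rw [sw_rep2 _ (by fun_prop) (by fun_prop) x hh]
    exact hh
  have hl : WithConv.toConv G * WithConv.toConv (comul (R := k) (A := H)) = 1 := by
    ext x
    have e1 : (WithConv.toConv G * WithConv.toConv (comul (R := k) (A := H))).ofConv x
        = sw k (fun a b => G a * comul (R := k) b) x := by
      obtain ⟨n, h1, h2, hh⟩ := exists_rep2 k x
      rw [sw_rep2 _ (by fun_prop) (by fun_prop) x hh]
      unfold IsRep2 at hh
      simp [LinearMap.convMul_def, hh]
    refine e1.trans ?_
    have e2 : ∀ a b : H, G a * comul (R := k) b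
        = sw k (fun p q => sw k (fun u v => (𝒮 q * u) ⊗ₜ[k] (𝒮 p * v)) b) a := fun a b => by
      simp only [hG, hD b, sw_mul, mul_sw, Algebra.TensorProduct.tmul_mul_tmul]
      exact sw_swap _ _ _
    simp only [e2]
    rw [sw_assoc (fun p q b => sw k (fun u v => (𝒮 q * u) ⊗ₜ[k] (𝒮 p * v)) b)
      (by fun_prop) (by fun_prop) (by fun_prop)]
    rw [sw_congr fun x y => sw_antipode_mul_tail (k := k) (f := fun s v => s ⊗ₜ[k] (𝒮 x * v))
      (by fun_prop) (by fun_prop) y]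
    rw [sw_antipode_mul (f := fun t => (1 : H) ⊗ₜ[k] t) (by fun_prop)]
    simp [Algebra.algebraMap_eq_smul_one, Algebra.TensorProduct.one_def]
  have e := congrArg WithConv.ofConv (left_inv_eq_right_inv hl LinearMap.comul_right_inv)
  have e' : comul (R := k) (𝒮 h) = G h := (LinearMap.congr_fun e h).symm
  rw [sw_eq_lift2 f hf1 hf2, e', hG, Lin.sw_map (k := k) (g := lift2 f hf1 hf2) (by fun_prop)]
  rfl

/-- An inverse of the antipode is an anti-coalgebra map. -/
theorem sw_antipode_inv {Sinv : H →ₗ[k] H} (hSinv : ∀ h : H, Sinv (𝒮 h) = h ∧ 𝒮 (Sinv h) = h)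
    {f : H → H → M} (hf1 : ∀ y, Lin k (fun x => f x y))
    (hf2 : ∀ x, Lin k (fun y => f x y)) (h : H) :
    sw k f (Sinv h) = sw k (fun x y => f (Sinv y) (Sinv x)) h := by
  obtain ⟨g, rfl⟩ : ∃ g, h = 𝒮 g := ⟨Sinv h, (hSinv h).2.symm⟩
  rw [sw_antipode (by fun_prop) (by fun_prop)]
  simp only [(hSinv _).1]

/-! ### The Drinfeld functionals of a coquasitriangular structure -/

section Drinfeld

variable {r ri : H →ₗ[k] H →ₗ[k] k}

theorem r_mul_left (hr : Coquasitriangular k H r ri) (a b f : H) :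
    r (a * b) f = sw k (fun x y => r a x * r b y) f := by
  obtain ⟨n, h1, h2, hh⟩ := exists_rep2 k f
  rw [sw_rep2 _ (by fun_prop) (by fun_prop) f hh, hr.mul_left _ _ _ _ _ hh]

theorem isRep2_one : IsRep2 k H 1 (fun _ : Fin 1 => 1) (fun _ => 1) := by
  simp [IsRep2, Algebra.TensorProduct.one_def]

/-- `R(1 ⊗ g) = ε(g)`: the functional `R(1 ⊗ ·)` is a convolution idempotent with a right
inverse. -/
theorem r_one_left (hr : Coquasitriangular k H r ri) (g : H) : r 1 g = ε g := by
  have hi : ∀ g : H, sw k (fun x y => r 1 x * ri 1 y) g = ε g := fun g => by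
    obtain ⟨n, h1, h2, hh⟩ := exists_rep2 k g
    rw [sw_rep2 _ (by fun_prop) (by fun_prop) g hh]
    simpa using hr.conv_left 1 g _ _ _ _ isRep2_one hh
  have he : ∀ g : H, sw k (fun x y => r 1 x * r 1 y) g = r 1 g := fun g => by
    rw [← r_mul_left hr, one_mul]
  have h1 := sw_counit_right (k := k) (f := fun x : H => r 1 x) (by fun_prop) g
  simp only [← hi, smul_eq_mul] at h1
  rw [← h1, ← hi g]
  simp only [mul_comm _ (r 1 _), mul_sw]
  rw [← sw_assoc (fun x y z => r 1 x * (r 1 y * ri 1 z)) (by fun_prop) (by fun_prop) (by fun_prop)]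
  refine sw_congr (fun x z => ?_) g
  rw [← he x, sw_mul]
  simp only [mul_assoc]

theorem braid (hr : Coquasitriangular k H r ri) (h g : H) :
    sw k (fun x y => sw k (fun a b => r y b • (a * x)) g) h
      = sw k (fun x y => sw k (fun a b => r x a • (y * b)) g) h := by
  obtain ⟨n, h1, h2, hh⟩ := exists_rep2 k h
  obtain ⟨m, g1, g2, hg⟩ := exists_rep2 k g
  rw [sw_rep2 _ (by fun_prop) (by fun_prop) h hh, sw_rep2 _ (by fun_prop) (by fun_prop) h hh]
  simp only [
    fun x y => sw_rep2 (k := k) (fun a b => r y b • (a * x)) (by fun_prop) (by fun_prop) g hg,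
    fun x y => sw_rep2 (k := k) (fun a b => r x a • (y * b)) (by fun_prop) (by fun_prop) g hg]
  exact hr.braid _ _ _ _ _ _ hh hg

/-- The braid relation for `R ∘ (S ⊗ S)`. -/
theorem braid_antipode (hr : Coquasitriangular k H r ri) {Sinv : H →ₗ[k] H}
    (hSinv : ∀ h : H, Sinv (𝒮 h) = h ∧ 𝒮 (Sinv h) = h) (h g : H) :
    sw k (fun x y => sw k (fun a b => r (𝒮 y) (𝒮 b) • (a * x)) g) h
      = sw k (fun x y => sw k (fun a b => r (𝒮 x) (𝒮 a) • (y * b)) g) h := by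
  have e := braid hr (𝒮 h) (𝒮 g)
  simp (disch := fun_prop) only [sw_antipode, ← HopfAlgebra.antipode_mul_antidistrib] at e
  have e' := congrArg Sinv e
  simp only [map_sw, map_smul,
    (hSinv _).1] at e'
  exact e'.symm

variable (r) in
/-- The functional `v(h) = R(S²(h₍₂₎) ⊗ h₍₁₎)`, the coefficient of `S_L`. -/
def drinV : H →ₗ[k] k :=
  Lin.toMap (f := fun h : H => sw k (fun x y => r (𝒮 (𝒮 y)) x) h) (by fun_prop)

variable (r) in
/-- The functional `w(h) = R(h₍₁₎ ⊗ S(h₍₂₎))`, the coefficient of `T`. -/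
def drinW : H →ₗ[k] k :=
  Lin.toMap (f := fun h : H => sw k (fun x y => r x (𝒮 y)) h) (by fun_prop)

variable (r) in
/-- The functional `u(h) = w(S(h)) = R(S(h₍₂₎) ⊗ S²(h₍₁₎))`, the convolution inverse of `v`. -/
def drinU : H →ₗ[k] k :=
  Lin.toMap (f := fun h : H => sw k (fun x y => r (𝒮 y) (𝒮 (𝒮 x))) h) (by fun_prop)

theorem drinV_apply (h : H) : drinV r h = sw k (fun x y => r (𝒮 (𝒮 y)) x) h := rfl
theorem drinW_apply (h : H) : drinW r h = sw k (fun x y => r x (𝒮 y)) h := rfl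
theorem drinU_apply (h : H) : drinU r h = sw k (fun x y => r (𝒮 y) (𝒮 (𝒮 x))) h := rfl

theorem drinW_antipode (h : H) : drinW r (𝒮 h) = drinU r h := by
  rw [drinW_apply, drinU_apply]
  simp (disch := fun_prop) only [sw_antipode]

/-- `∑ u(h₍₂₎) h₍₃₎ S(h₍₁₎) = u(h) 1`, the braid relation between `h₍₂₎` and `S(h₍₁₎)`. -/
theorem drinU_mul_antipode (hr : Coquasitriangular k H r ri) {Sinv : H →ₗ[k] H}
    (hSinv : ∀ h : H, Sinv (𝒮 h) = h ∧ 𝒮 (Sinv h) = h) (h : H) :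
    sw k (fun a y => sw k (fun b c => drinU r b • (c * 𝒮 a)) y) h = drinU r h • (1 : H) := by
  have e : ∀ x y : H,
      sw k (fun p q => sw k (fun a b => r (𝒮 q) (𝒮 (𝒮 a)) • (𝒮 b * p)) x) y
        = sw k (fun p q => sw k (fun a b => r (𝒮 p) (𝒮 (𝒮 b)) • (q * 𝒮 a)) x) y := fun x y => by
    have := braid_antipode hr hSinv y (𝒮 x)
    simpa (disch := fun_prop) only [sw_antipode] using this
  have e' := sw_congr (k := k) e h
  rw [sw_congr (k := k) fun x y => sw_swap _ y x,
    sw_assoc (fun a b y => sw k (fun p q => r (𝒮 q) (𝒮 (𝒮 a)) • (𝒮 b * p)) y)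
      (by fun_prop) (by fun_prop) (by fun_prop),
    sw_congr (k := k) fun a y => sw_antipode_mul_tail (f := fun s v => r (𝒮 v) (𝒮 (𝒮 a)) • s)
      (by fun_prop) (by fun_prop) y,
    sw_congr (k := k) fun x y => sw_swap _ y x,
    sw_assoc (fun a b y => sw k (fun p q => r (𝒮 p) (𝒮 (𝒮 b)) • (q * 𝒮 a)) y)
      (by fun_prop) (by fun_prop) (by fun_prop)] at e'
  simp only [drinU_apply, sw_smul]
  rw [e']
  refine sw_congr (fun a y => ?_) h
  exact sw_assoc (fun b p q => r (𝒮 p) (𝒮 (𝒮 b)) • (q * 𝒮 a))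
    (by fun_prop) (by fun_prop) (by fun_prop) y

/-- `∑ u(h₍₁₎) h₍₂₎ = ∑ u(h₍₂₎) S²(h₍₁₎)`: conjugation by `u` implements `S²`. -/
theorem drinU_conj (hr : Coquasitriangular k H r ri) {Sinv : H →ₗ[k] H}
    (hSinv : ∀ h : H, Sinv (𝒮 h) = h ∧ 𝒮 (Sinv h) = h) (h : H) :
    sw k (fun a b => drinU r a • b) h = sw k (fun a b => drinU r b • 𝒮 (𝒮 a)) h := by
  have e : ∀ x y : H, sw k (fun a z => sw k (fun b c => drinU r b • (c * 𝒮 (𝒮 x * a))) z) y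
      = drinU r y • 𝒮 (𝒮 x) := fun x y => by
    have := congrArg (fun t => t * 𝒮 (𝒮 x)) (drinU_mul_antipode hr hSinv y)
    simpa only [sw_mul, smul_mul_assoc, mul_assoc, one_mul,
      ← HopfAlgebra.antipode_mul_antidistrib] using this
  rw [← sw_congr (k := k) e h, sw_antipode_mul_tail
    (f := fun s z => sw k (fun b c => drinU r b • (c * 𝒮 s)) z) (by fun_prop) (by fun_prop)]
  simp only [HopfAlgebra.antipode_one, mul_one]

/-- The convolution product `u * v` is the counit. -/
theorem drinU_conv_drinV (hr : Coquasitriangular k H r ri) {Sinv : H →ₗ[k] H}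
    (hSinv : ∀ h : H, Sinv (𝒮 h) = h ∧ 𝒮 (Sinv h) = h) (h : H) :
    sw k (fun x y => drinU r x * drinV r y) h = ε h := by
  have c : ∀ b z : H, sw k (fun x y => drinU r x * r (𝒮 (𝒮 b)) y) z
      = sw k (fun x y => drinU r y * r (𝒮 (𝒮 b)) (𝒮 (𝒮 x))) z := fun b z => by
    have := congrArg (fun t => r (𝒮 (𝒮 b)) t) (drinU_conj hr hSinv z)
    simpa only [map_sw, map_smul, smul_eq_mul] using this
  have m : ∀ q b w : H, sw k (fun x p => r (𝒮 q) (𝒮 (𝒮 p)) * r (𝒮 (𝒮 b)) (𝒮 (𝒮 x))) w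
      = r (𝒮 (q * 𝒮 b)) (𝒮 (𝒮 w)) := fun q b w => by
    rw [HopfAlgebra.antipode_mul_antidistrib, r_mul_left hr]
    simp (disch := fun_prop) only [sw_antipode, mul_comm]
  calc sw k (fun x y => drinU r x * drinV r y) h
      = sw k (fun x y => sw k (fun a b => drinU r x * r (𝒮 (𝒮 b)) a) y) h := by
        simp only [drinV_apply, mul_sw]
    _ = sw k (fun z b => sw k (fun x y => drinU r x * r (𝒮 (𝒮 b)) y) z) h :=
        (sw_assoc (fun x a b => drinU r x * r (𝒮 (𝒮 b)) a)
          (by fun_prop) (by fun_prop) (by fun_prop) h).symm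
    _ = sw k (fun z b => sw k (fun x y => sw k (fun p q =>
          r (𝒮 q) (𝒮 (𝒮 p)) * r (𝒮 (𝒮 b)) (𝒮 (𝒮 x))) y) z) h := by
        simp only [c]
        simp only [drinU_apply, sw_mul]
    _ = sw k (fun z b => sw k (fun w q => sw k (fun x p =>
          r (𝒮 q) (𝒮 (𝒮 p)) * r (𝒮 (𝒮 b)) (𝒮 (𝒮 x))) w) z) h :=
        sw_congr (fun z b => (sw_assoc (fun x p q =>
          r (𝒮 q) (𝒮 (𝒮 p)) * r (𝒮 (𝒮 b)) (𝒮 (𝒮 x)))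
          (by fun_prop) (by fun_prop) (by fun_prop) z).symm) h
    _ = sw k (fun w y => sw k (fun q b => r (𝒮 (q * 𝒮 b)) (𝒮 (𝒮 w))) y) h := by
        simp only [m]
        exact sw_assoc (fun w q b => r (𝒮 (q * 𝒮 b)) (𝒮 (𝒮 w)))
          (by fun_prop) (by fun_prop) (by fun_prop) h
    _ = sw k (fun w y => ε y • ε w) h := by
        refine sw_congr (fun w y => ?_) h
        rw [sw_mul_antipode (f := fun t => r (𝒮 t) (𝒮 (𝒮 w))) (by fun_prop),
          HopfAlgebra.antipode_one, r_one_left hr]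
        simp
    _ = ε h := sw_counit_right (f := fun x => ε x) (by fun_prop) h

/-- The convolution product `v * u` is the counit.  By `drinU_conj` and `u * v = ε`, the
functional `v ∘ S²` is a left inverse of `u`, hence equals its right inverse `v`. -/
theorem drinV_conv_drinU (hr : Coquasitriangular k H r ri) {Sinv : H →ₗ[k] H}
    (hSinv : ∀ h : H, Sinv (𝒮 h) = h ∧ 𝒮 (Sinv h) = h) (h : H) :
    sw k (fun x y => drinV r x * drinU r y) h = ε h := by
  have l : ∀ h : H, sw k (fun x y => drinV r (𝒮 (𝒮 x)) * drinU r y) h = ε h := fun h => by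
    have := congrArg (fun t => drinV r t) (drinU_conj hr hSinv h)
    simp only [map_sw, map_smul, smul_eq_mul] at this
    rw [drinU_conv_drinV hr hSinv] at this
    rw [this]
    simp only [mul_comm]
  have e : ∀ h : H, drinV r (𝒮 (𝒮 h)) = drinV r h := fun h => by
    calc drinV r (𝒮 (𝒮 h))
        = sw k (fun x y => ε y • drinV r (𝒮 (𝒮 x))) h :=
          (sw_counit_right (f := fun x => drinV r (𝒮 (𝒮 x))) (by fun_prop) h).symm
      _ = sw k (fun x y => sw k (fun a b =>
            drinV r (𝒮 (𝒮 x)) * (drinU r a * drinV r b)) y) h := by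
          refine sw_congr (fun x y => ?_) h
          rw [← drinU_conv_drinV hr hSinv y, smul_eq_mul, mul_comm, mul_sw]
      _ = sw k (fun z b => sw k (fun x a =>
            drinV r (𝒮 (𝒮 x)) * (drinU r a * drinV r b)) z) h :=
          (sw_assoc (fun x a b => drinV r (𝒮 (𝒮 x)) * (drinU r a * drinV r b))
            (by fun_prop) (by fun_prop) (by fun_prop) h).symm
      _ = sw k (fun z b => ε z • drinV r b) h := by
          refine sw_congr (fun z b => ?_) h
          rw [← l z, sw_smul]
          simp only [smul_eq_mul, mul_assoc]
      _ = drinV r h := sw_counit_left (f := fun x => drinV r x) (by fun_prop) h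
  rw [← l h]
  simp only [e]

end Drinfeld

/-! ### Threefold and fourfold representatives, and the algebroid product -/

variable (k) in
/-- A representative of `h₍₁₎ ⊗ h₍₂₎ ⊗ h₍₃₎` on which trilinear functions sum to the corresponding
iterated Sweedler sum. -/
theorem exists_rep3 (h : H) : ∃ (n : ℕ) (h1 h2 h3 : Fin n → H), IsRep3 k H h h1 h2 h3 ∧
    ∀ {M : Type*} [AddCommGroup M] [Module k M] (f : H → H → H → M),
      (∀ y z, Lin k (fun x => f x y z)) → (∀ x z, Lin k (fun y => f x y z)) →
      (∀ x y, Lin k (fun z => f x y z)) →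
      ∑ i, f (h1 i) (h2 i) (h3 i) = sw k (fun x z => sw k (fun a b => f a b z) x) h := by
  obtain ⟨n, h1, h2, hh⟩ := exists_rep2 k h
  choose m a b hab using fun i => exists_rep2 k (h1 i)
  let e := (Fintype.equivFin (Σ i, Fin (m i))).symm
  refine ⟨_, fun t => a (e t).1 (e t).2, fun t => b (e t).1 (e t).2, fun t => h2 (e t).1, ?_, ?_⟩
  · rw [IsRep3, Equiv.sum_comp e (fun s => (a s.1 s.2 ⊗ₜ[k] b s.1 s.2) ⊗ₜ[k] h2 s.1),
      Fintype.sum_sigma]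
    unfold IsRep2 at hh hab
    simp [Δ3, hh, hab, TensorProduct.sum_tmul]
  · intro M _ _ f hf1 hf2 hf3
    rw [Equiv.sum_comp e (fun s => f (a s.1 s.2) (b s.1 s.2) (h2 s.1)), Fintype.sum_sigma,
      sw_rep2 _ (by fun_prop) (by fun_prop) h hh]
    refine Finset.sum_congr rfl fun i _ => ?_
    rw [sw_rep2 _ (by fun_prop) (by fun_prop) _ (hab i)]

variable (k) in
/-- A representative of `h₍₁₎ ⊗ h₍₂₎ ⊗ h₍₃₎ ⊗ h₍₄₎` on which 4-linear functions sum to the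
corresponding iterated Sweedler sum. -/
theorem exists_rep4 (h : H) : ∃ (n : ℕ) (h1 h2 h3 h4 : Fin n → H), IsRep4 k H h h1 h2 h3 h4 ∧
    ∀ {M : Type*} [AddCommGroup M] [Module k M] (f : H → H → H → H → M),
      (∀ y z t, Lin k (fun x => f x y z t)) → (∀ x z t, Lin k (fun y => f x y z t)) →
      (∀ x y t, Lin k (fun z => f x y z t)) → (∀ x y z, Lin k (fun t => f x y z t)) →
      ∑ i, f (h1 i) (h2 i) (h3 i) (h4 i)
        = sw k (fun x d => sw k (fun y c => sw k (fun a b => f a b c d) y) x) h := by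
  obtain ⟨n, h1, h2, hh⟩ := exists_rep2 k h
  choose m a b c hab hf using fun i => exists_rep3 k (h1 i)
  let e := (Fintype.equivFin (Σ i, Fin (m i))).symm
  refine ⟨_, fun t => a (e t).1 (e t).2, fun t => b (e t).1 (e t).2, fun t => c (e t).1 (e t).2,
    fun t => h2 (e t).1, ?_, ?_⟩
  · rw [IsRep4, Equiv.sum_comp e
      (fun s => ((a s.1 s.2 ⊗ₜ[k] b s.1 s.2) ⊗ₜ[k] c s.1 s.2) ⊗ₜ[k] h2 s.1), Fintype.sum_sigma]
    unfold IsRep2 at hh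
    unfold IsRep3 at hab
    simp [Δ4, hh, hab, TensorProduct.sum_tmul]
  · intro M _ _ f hf1 hf2 hf3 hf4
    rw [Equiv.sum_comp e (fun s => f (a s.1 s.2) (b s.1 s.2) (c s.1 s.2) (h2 s.1)),
      Fintype.sum_sigma, sw_rep2 _ (by fun_prop) (by fun_prop) h hh]
    refine Finset.sum_congr rfl fun i _ => ?_
    exact hf i (fun x y z => f x y z (h2 i)) (by fun_prop) (by fun_prop) (by fun_prop)

theorem isRep4_one :
    IsRep4 k H 1 (fun _ : Fin 1 => 1) (fun _ => 1) (fun _ => 1) (fun _ => 1) := by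
  simp [IsRep4, Δ4, Δ3, Algebra.TensorProduct.one_def]

section Algebroid

variable {B : Type*} [Ring B] [Algebra k B]
  {act : H →ₗ[k] B →ₗ[k] B} {σ σi : H →ₗ[k] H →ₗ[k] B}
  {mult : B ⊗[k] (B ⊗[k] H) →ₗ[k] B ⊗[k] (B ⊗[k] H) →ₗ[k] B ⊗[k] (B ⊗[k] H)}

/-- Left multiplication by a target element: `t(c)(b ⊗ b' ⊗ g) = b ⊗ b'(S(g₍₂₎) ▷ c) ⊗ g₍₁₎`. -/
theorem target_mul (hd : CocycleDatum k H B act σ σi) (hm : IsAlgebroidMul k H B act σ mult)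
    (c b b' : B) (g : H) :
    mult ((1 : B) ⊗ₜ[k] (c ⊗ₜ[k] (1 : H))) (b ⊗ₜ[k] (b' ⊗ₜ[k] g))
      = sw k (fun x d => b ⊗ₜ[k] ((b' * act (𝒮 d) c) ⊗ₜ[k] x)) g := by
  obtain ⟨n, g1, g2, g3, g4, hg, hf⟩ := exists_rep4 k g
  rw [hm _ _ _ _ _ _ _ _ _ _ _ _ _ _ isRep4_one hg]
  have := hf (fun x y z t => ε z • ε x • (b ⊗ₜ[k] ((b' * act (𝒮 t) c) ⊗ₜ[k] y)))
    (by fun_prop) (by fun_prop) (by fun_prop) (by fun_prop)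
  simp only [Finset.univ_unique, Finset.sum_singleton, hd.one_act, hd.one_sigma, one_mul,
    HopfAlgebra.antipode_one, hd.sigma_one, HopfAlgebra.counit_antipode, mul_smul_comm, mul_one,
    ← TensorProduct.smul_tmul', TensorProduct.tmul_smul]
  rw [this]
  refine sw_congr (fun x d => ?_) g
  simp (disch := fun_prop) only [sw_counit_left, sw_counit_right, ← smul_sw]

/-- Right multiplication by a source element:
`(b ⊗ b' ⊗ h)s(c) = b(h₍₁₎ ▷ c) ⊗ b' ⊗ h₍₂₎`. -/
theorem mul_source (hd : CocycleDatum k H B act σ σi) (hm : IsAlgebroidMul k H B act σ mult)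
    (c b b' : B) (h : H) :
    mult (b ⊗ₜ[k] (b' ⊗ₜ[k] h)) (c ⊗ₜ[k] ((1 : B) ⊗ₜ[k] (1 : H)))
      = sw k (fun x y => (b * act x c) ⊗ₜ[k] (b' ⊗ₜ[k] y)) h := by
  obtain ⟨n, h1, h2, h3, h4, hh, hf⟩ := exists_rep4 k h
  rw [hm _ _ _ _ _ _ _ _ _ _ _ _ _ _ hh isRep4_one]
  have := hf (fun x y z t => ε t • ε y • ((b * act x c) ⊗ₜ[k] (b' ⊗ₜ[k] z)))
    (by fun_prop) (by fun_prop) (by fun_prop) (by fun_prop)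
  simp only [Finset.univ_unique, Finset.sum_singleton, hd.one_act, hd.one_sigma, one_mul,
    HopfAlgebra.antipode_one, hd.sigma_one, HopfAlgebra.counit_antipode, mul_smul_comm, mul_one,
    ← TensorProduct.smul_tmul', TensorProduct.tmul_smul]
  rw [this]
  simp (disch := fun_prop) only [sw_counit_right, ← smul_sw]

theorem source_mul (hd : CocycleDatum k H B act σ σi) (hm : IsAlgebroidMul k H B act σ mult)
    (c b b' : B) (g : H) :
    mult (c ⊗ₜ[k] ((1 : B) ⊗ₜ[k] (1 : H))) (b ⊗ₜ[k] (b' ⊗ₜ[k] g))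
      = (c * b) ⊗ₜ[k] (b' ⊗ₜ[k] g) := by
  obtain ⟨n, g1, g2, g3, g4, hg, hf⟩ := exists_rep4 k g
  rw [hm _ _ _ _ _ _ _ _ _ _ _ _ _ _ isRep4_one hg]
  have := hf (fun x y z t => ε z • ε t • ε x • ((c * b) ⊗ₜ[k] (b' ⊗ₜ[k] y)))
    (by fun_prop) (by fun_prop) (by fun_prop) (by fun_prop)
  simp only [Finset.univ_unique, Finset.sum_singleton, hd.one_act, hd.one_sigma, one_mul,
    HopfAlgebra.antipode_one, hd.sigma_one, HopfAlgebra.counit_antipode, mul_smul_comm, mul_one,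
    hd.toMeasuring.act_one, ← TensorProduct.smul_tmul', TensorProduct.tmul_smul]
  rw [this]
  simp (disch := fun_prop) only [sw_counit_left, sw_counit_right, ← smul_sw]

theorem mul_target (hd : CocycleDatum k H B act σ σi) (hm : IsAlgebroidMul k H B act σ mult)
    (c b b' : B) (h : H) :
    mult (b ⊗ₜ[k] (b' ⊗ₜ[k] h)) ((1 : B) ⊗ₜ[k] (c ⊗ₜ[k] (1 : H)))
      = b ⊗ₜ[k] ((c * b') ⊗ₜ[k] h) := by
  obtain ⟨n, h1, h2, h3, h4, hh, hf⟩ := exists_rep4 k h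
  rw [hm _ _ _ _ _ _ _ _ _ _ _ _ _ _ hh isRep4_one]
  have := hf (fun x y z t => ε t • ε y • ε x • (b ⊗ₜ[k] ((c * b') ⊗ₜ[k] z)))
    (by fun_prop) (by fun_prop) (by fun_prop) (by fun_prop)
  simp only [Finset.univ_unique, Finset.sum_singleton, hd.one_act, hd.one_sigma,
    HopfAlgebra.antipode_one, hd.sigma_one, HopfAlgebra.counit_antipode, mul_smul_comm, mul_one,
    hd.toMeasuring.act_one, ← TensorProduct.smul_tmul', TensorProduct.tmul_smul]
  rw [this]
  simp (disch := fun_prop) only [sw_counit_left, sw_counit_right, ← smul_sw]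

end Algebroid

end Sweedler

/-! ### The antipode and its inverse -/

section Statements

variable {k : Type*} [Field k]
variable {H : Type*} [Ring H] [HopfAlgebra k H]
variable {B : Type*} [Ring B] [Algebra k B]

local notation "𝑺" => HopfAlgebra.antipode (R := k)

/-- Proposition 4.4 (coquasitriangular antipode for the cocycle Hopf algebroid):
`S_L(b⊗b'⊗h) = R(S²(h₍₂₎)⊗h₍₁₎)·b' ⊗ b ⊗ S(h₍₃₎)` and
`T(b⊗b'⊗h) = R(h₍₂₎⊗S(h₍₃₎))·b' ⊗ b ⊗ S⁻¹(h₍₁₎)` are mutually inverse, and for any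
cocycle datum they satisfy the antipode compatibilities with source and target. -/
theorem statement19 (r ri : H →ₗ[k] H →ₗ[k] k) (hr : Coquasitriangular k H r ri)
    (Sinv : H →ₗ[k] H)
    (hSinv : ∀ h : H, Sinv (𝑺 h) = h ∧ 𝑺 (Sinv h) = h)
    (SL Tm : B ⊗[k] (B ⊗[k] H) →ₗ[k] B ⊗[k] (B ⊗[k] H))
    (hSL : ∀ (b b' : B) (h : H) {n : ℕ} (h1 h2 h3 : Fin n → H), IsRep3 k H h h1 h2 h3 →
      SL (b ⊗ₜ[k] (b' ⊗ₜ[k] h))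
        = ∑ i, r (𝑺 (𝑺 (h2 i))) (h1 i) • (b' ⊗ₜ[k] (b ⊗ₜ[k] 𝑺 (h3 i))))
    (hTm : ∀ (b b' : B) (h : H) {n : ℕ} (h1 h2 h3 : Fin n → H), IsRep3 k H h h1 h2 h3 →
      Tm (b ⊗ₜ[k] (b' ⊗ₜ[k] h))
        = ∑ i, r (h2 i) (𝑺 (h3 i)) • (b' ⊗ₜ[k] (b ⊗ₜ[k] Sinv (h1 i)))) :
    -- S_L and T are mutually inverse
    (∀ X : B ⊗[k] (B ⊗[k] H), Tm (SL X) = X ∧ SL (Tm X) = X)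
    ∧
    -- compatibilities with source and target for the cocycle Hopf algebroid product
    (∀ (act : H →ₗ[k] B →ₗ[k] B) (σ σi : H →ₗ[k] H →ₗ[k] B)
        (mult : B ⊗[k] (B ⊗[k] H) →ₗ[k] B ⊗[k] (B ⊗[k] H) →ₗ[k] B ⊗[k] (B ⊗[k] H)),
      CocycleDatum k H B act σ σi → IsAlgebroidMul k H B act σ mult →
      (∀ (c : B) (X : B ⊗[k] (B ⊗[k] H)),
        SL (mult ((1 : B) ⊗ₜ[k] (c ⊗ₜ[k] (1 : H))) X)
          = mult (SL X) (c ⊗ₜ[k] ((1 : B) ⊗ₜ[k] (1 : H))))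
      ∧ (∀ (c : B) (X : B ⊗[k] (B ⊗[k] H)),
          Tm (mult (c ⊗ₜ[k] ((1 : B) ⊗ₜ[k] (1 : H))) X)
            = mult (Tm X) ((1 : B) ⊗ₜ[k] (c ⊗ₜ[k] (1 : H))))) := by
  have hSL' : ∀ (b b' : B) (h : H), SL (b ⊗ₜ[k] (b' ⊗ₜ[k] h))
      = sw k (fun z q => drinV r z • (b' ⊗ₜ[k] (b ⊗ₜ[k] 𝑺 q))) h := fun b b' h => by
    obtain ⟨n, h1, h2, h3, hh, hf⟩ := exists_rep3 k h
    rw [hSL _ _ _ _ _ _ hh, hf (fun x y z => r (𝑺 (𝑺 y)) x • (b' ⊗ₜ[k] (b ⊗ₜ[k] 𝑺 z)))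
      (by fun_prop) (by fun_prop) (by fun_prop)]
    refine sw_congr (fun z q => ?_) h
    rw [drinV_apply, sw_smul (b' ⊗ₜ[k] (b ⊗ₜ[k] 𝑺 q))]
  have hTm' : ∀ (b b' : B) (h : H), Tm (b ⊗ₜ[k] (b' ⊗ₜ[k] h))
      = sw k (fun x y => drinW r y • (b' ⊗ₜ[k] (b ⊗ₜ[k] Sinv x))) h := fun b b' h => by
    obtain ⟨n, h1, h2, h3, hh, hf⟩ := exists_rep3 k h
    rw [hTm _ _ _ _ _ _ hh, hf (fun x y z => r y (𝑺 z) • (b' ⊗ₜ[k] (b ⊗ₜ[k] Sinv x)))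
      (by fun_prop) (by fun_prop) (by fun_prop),
      sw_assoc (fun x y z => r y (𝑺 z) • (b' ⊗ₜ[k] (b ⊗ₜ[k] Sinv x)))
      (by fun_prop) (by fun_prop) (by fun_prop)]
    refine sw_congr (fun x y => ?_) h
    rw [drinW_apply, sw_smul (b' ⊗ₜ[k] (b ⊗ₜ[k] Sinv x))]
  have hflip : ∀ (m : B ⊗[k] (B ⊗[k] H) →ₗ[k] B ⊗[k] (B ⊗[k] H) →ₗ[k] B ⊗[k] (B ⊗[k] H))
      (f : H → H → B ⊗[k] (B ⊗[k] H)) (h : H) (Z : B ⊗[k] (B ⊗[k] H)),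
      m (sw k f h) Z = sw k (fun x y => m (f x y) Z) h := fun m f h Z => map_sw (m.flip Z) f h
  refine ⟨fun X => ⟨?_, ?_⟩, fun act σ σi mult hd hm => ⟨fun c X => ?_, fun c X => ?_⟩⟩
  · induction X using TensorProduct.induction_on with
    | zero => simp
    | add X Y hX hY => simp only [map_add, hX, hY]
    | tmul b Y =>
      induction Y using TensorProduct.induction_on with
      | zero => simp
      | add X Y hX hY => simp only [TensorProduct.tmul_add, map_add, hX, hY]
      | tmul b' h =>
        rw [hSL']
        simp only [map_sw, map_smul, hTm']
        simp (disch := fun_prop) only [sw_antipode, (hSinv _).1, drinW_antipode, smul_sw]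
        rw [← sw_assoc (fun z x y => drinV r z • drinU r x • (b ⊗ₜ[k] (b' ⊗ₜ[k] y)))
          (by fun_prop) (by fun_prop) (by fun_prop),
          ← sw_counit_left (k := k) (f := fun t => b ⊗ₜ[k] (b' ⊗ₜ[k] t)) (by fun_prop) h]
        refine sw_congr (fun x y => ?_) h
        rw [← drinV_conv_drinU hr hSinv x, sw_smul]
        simp only [mul_smul]
  -- `w` and `v ∘ S⁻¹` are the transports of `u` and `v` along `S⁻¹`, which reverses convolution
  · have hvw : ∀ y : H, sw k (fun a b => drinV r (Sinv a) * drinW r b) y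
        = Coalgebra.counit (R := k) y := fun y => by
      obtain ⟨z, rfl⟩ : ∃ z, y = 𝑺 z := ⟨Sinv y, (hSinv y).2.symm⟩
      rw [HopfAlgebra.counit_antipode, ← drinU_conv_drinV hr hSinv z]
      simp (disch := fun_prop) only [sw_antipode, (hSinv _).1, drinW_antipode, mul_comm]
    induction X using TensorProduct.induction_on with
    | zero => simp
    | add X Y hX hY => simp only [map_add, hX, hY]
    | tmul b Y =>
      induction Y using TensorProduct.induction_on with
      | zero => simp
      | add X Y hX hY => simp only [TensorProduct.tmul_add, map_add, hX, hY]
      | tmul b' h =>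
        rw [hTm']
        simp only [map_sw, map_smul, hSL']
        simp (disch := fun_prop) only [sw_antipode_inv hSinv, (hSinv _).2, smul_sw]
        rw [sw_assoc (fun x a y => drinW r y • drinV r (Sinv a) • (b ⊗ₜ[k] (b' ⊗ₜ[k] x)))
          (by fun_prop) (by fun_prop) (by fun_prop),
          ← sw_counit_right (k := k) (f := fun t => b ⊗ₜ[k] (b' ⊗ₜ[k] t)) (by fun_prop) h]
        refine sw_congr (fun x y => ?_) h
        rw [← hvw y, sw_smul]
        simp only [smul_smul, mul_comm]
  · induction X using TensorProduct.induction_on with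
    | zero => simp
    | add X Y hX hY => simp only [map_add, LinearMap.add_apply, hX, hY]
    | tmul b Y =>
      induction Y using TensorProduct.induction_on with
      | zero => simp
      | add X Y hX hY =>
        simp only [TensorProduct.tmul_add, map_add, LinearMap.add_apply, hX, hY]
      | tmul b' g =>
        rw [target_mul hd hm, hSL', hflip]
        simp only [map_sw, map_smul, LinearMap.smul_apply, hSL', mul_source hd hm]
        simp (disch := fun_prop) only [sw_antipode, smul_sw]
        exact sw_assoc (fun z q d => drinV r z • ((b' * act (𝑺 d) c) ⊗ₜ[k] (b ⊗ₜ[k] 𝑺 q)))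
          (by fun_prop) (by fun_prop) (by fun_prop) g
  · induction X using TensorProduct.induction_on with
    | zero => simp
    | add X Y hX hY => simp only [map_add, LinearMap.add_apply, hX, hY]
    | tmul b Y =>
      induction Y using TensorProduct.induction_on with
      | zero => simp
      | add X Y hX hY =>
        simp only [TensorProduct.tmul_add, map_add, LinearMap.add_apply, hX, hY]
      | tmul b' g =>
        rw [source_mul hd hm, hTm', hTm', hflip]
        simp only [map_smul, LinearMap.smul_apply, mul_target hd hm]

end Statements
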